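/- In the tree block setting, assuming (A1) and (A2), there is a universal constant C₀ > 0 (independent of d, G, T, μ and the partition) such that for every σ̂ ∈ Ω_𝓡, | π_𝓡(σ̂)·|Ω_𝓡| − 1 | ≤ C₀/d, where π_𝓡(σ̂) = |{σ ∈ Ω^μ_E : σ|_F = σ̂}| / |Ω^μ_E| is the projection onto F of the uniform distribution on Ω^μ_E. -/

import Mathlib

/-!
The sizes of any two fibres of the projection `σ ↦ σ|_F` are compared by switching colours, which
avoids counting the colourings of a block explicitly.

Let `a` and `b` be two colourings of `F` that extend to the whole tree. To turn an extension of `a`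
into an extension of `b`, the colours `a i` and `b i` are swapped on the block hanging from `e_i`,
for all `i` simultaneously. This is allowed in a block that does not meet the interior boundary of
`T`. If `e_i` itself is in the interior boundary, its lower end is a leaf of `T` and recolouring
`e_i` alone suffices. Otherwise the assumption that the block is splitting leaves exactly one
interior boundary edge in it, not incident to `e_i`, so the path from `e_i` to that edge begins
with `e_i, h_i, q_i`. There the swap is made only on the part of the block not beyond `h_i`,
and the result is proper as soon as `h_i` does not have colour `b i`
(`card_goodSet_le`).

Conversely, a colouring in which `h_i` does have colour `b i` can be changed by swapping `b i` and
`c` on the part of the block that is not beyond `q_i`, for each colour `c` other than `a i`, `b i`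
and the colour of `q_i`. As there are at least `d - 2` such `c` and the original is determined
by the result, the colourings with the bad colour at `h_i` are outnumbered by a factor `d - 2`
(`card_bad_mul_le`). There are at most two exceptional blocks, so the fibres agree up to the factor
`((d - 1) / (d - 2)) ^ 2` (`card_fibre_le`), and averaging over all fibres gives the theorem with
constant `9` (`abs_pushforward_sub_one_le`).

The geometry is handled by rooting `G` and identifying each edge with its lower endpoint: a set
of descendants is only left through the edge above it (`Rooting.ch_eq_of_leave`), which yields all
the incidence conditions on the switching sets. Vertex-rooted and edge-rooted partitions are
treated together in `leafy_or_branch`.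
-/

open Finset
open scoped Classical

section Markov

variable {Ω : Type*} [Fintype Ω]

/-- A generator matrix: nonnegative off-diagonal entries, zero row sums. -/
def IsGenerator (L : Ω → Ω → ℝ) : Prop :=
  (∀ x y : Ω, x ≠ y → 0 ≤ L x y) ∧ (∀ x : Ω, ∑ y : Ω, L x y = 0)

/-- A transition of a generator matrix. -/
def IsTransition (L : Ω → Ω → ℝ) (x y : Ω) : Prop := x ≠ y ∧ 0 < L x y

/-- Ergodicity: the directed graph of transitions is strongly connected. -/
def IsErgodicGen (L : Ω → Ω → ℝ) : Prop :=
  ∀ x y : Ω, Relation.ReflTransGen (IsTransition L) x y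

/-- Reversibility with respect to a distribution π. -/
def IsReversible (L : Ω → Ω → ℝ) (π : Ω → ℝ) : Prop :=
  ∀ x y : Ω, π x * L x y = π y * L y x

/-- The variance form. -/
noncomputable def VarForm (π : Ω → ℝ) (f : Ω → ℝ) : ℝ :=
  (1 / 2) * ∑ a : Ω, ∑ b : Ω, π a * π b * (f a - f b) ^ 2

/-- The Dirichlet form. -/
noncomputable def DirForm (π : Ω → ℝ) (L : Ω → Ω → ℝ) (f : Ω → ℝ) : ℝ :=
  (1 / 2) * ∑ a : Ω, ∑ b : Ω, π a * L a b * (f a - f b) ^ 2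

/-- The spectral gap: infimum (= minimum) of the Rayleigh quotient over nonconstant functions. -/
noncomputable def specGap (π : Ω → ℝ) (L : Ω → Ω → ℝ) : ℝ :=
  sInf {r : ℝ | ∃ f : Ω → ℝ, (∃ a b : Ω, f a ≠ f b) ∧ r = DirForm π L f / VarForm π f}

/-- The relaxation time, with the convention that it equals 1 on a one-point space. -/
noncomputable def relaxTime (π : Ω → ℝ) (L : Ω → Ω → ℝ) : ℝ :=
  if ∃ a b : Ω, a ≠ b then 1 / specGap π L else 1

/-- The uniform distribution on a finite type. -/
noncomputable def unif (Ω : Type*) [Fintype Ω] : Ω → ℝ := fun _ => 1 / (Fintype.card Ω : ℝ)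

end Markov

section Glauber

variable {I : Type*} [Fintype I] {k : ℕ} {S : Type*} [Fintype S] [DecidableEq S]

/-- Off-diagonal entry of the Glauber dynamics: if the two states differ at exactly one site,
the rate of that site; otherwise `0`. -/
noncomputable def glauberOff (p : I → ℝ) (val : S → I → Fin k) (a b : S) : ℝ :=
  if (Finset.univ.filter fun w => val a w ≠ val b w).card = 1 then
    ∑ w ∈ Finset.univ.filter fun w => val a w ≠ val b w, p w
  else 0

/-- The Glauber dynamics generator with site rates `p`, on a state space `S` of configurations
(described by `val : S → I → Fin k`): off-diagonal entries are the rate of the unique differing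
site, diagonal entries make row sums vanish. -/
noncomputable def glauber (p : I → ℝ) (val : S → I → Fin k) : S → S → ℝ :=
  fun σ η =>
    if σ = η then -∑ η' ∈ Finset.univ.filter fun b => b ≠ σ, glauberOff p val σ η'
    else glauberOff p val σ η

end Glauber

section Trees

variable {V : Type} [Fintype V] [DecidableEq V]

/-- Two edges are incident if they are distinct and share an endpoint. -/
def EdgeInc (e f : Sym2 V) : Prop := e ≠ f ∧ ∃ v : V, v ∈ e ∧ v ∈ f

/-- A proper `k`-edge-colouring of `G` (total map on `Sym2 V`, constrained on edges). -/
def ProperECol (G : SimpleGraph V) {k : ℕ} (σ : Sym2 V → Fin k) : Prop :=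
  ∀ e ∈ G.edgeSet, ∀ f ∈ G.edgeSet, EdgeInc e f → σ e ≠ σ f

/-- `Ω^χ_{E'}`: proper edge-colourings of `G` agreeing with `χ` off `E'`. -/
abbrev OmegaE (G : SimpleGraph V) (k : ℕ) (E' : Finset (Sym2 V)) (χ : Sym2 V → Fin k) :=
  {σ : Sym2 V → Fin k // ProperECol G σ ∧ ∀ e ∉ E', σ e = χ e}

/-- The Glauber dynamics `𝓛^χ_{E'}` for `k`-edge-colourings: each edge is updated at
rate `1/k`. -/
noncomputable def treeGen (G : SimpleGraph V) (k : ℕ) (E' : Finset (Sym2 V))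
    (χ : Sym2 V → Fin k) : OmegaE G k E' χ → OmegaE G k E' χ → ℝ :=
  glauber (fun _ : Sym2 V => 1 / (k : ℝ)) (fun σ => σ.1)

variable (G : SimpleGraph V) [DecidableRel G.Adj]

/-- The exterior boundary `∂T` of the subtree with edge set `ET`. -/
noncomputable def extBd (ET : Finset (Sym2 V)) : Finset (Sym2 V) :=
  (G.edgeFinset \ ET).filter fun e => ∃ f ∈ ET, EdgeInc e f

/-- The interior boundary `∂̄T` of the subtree with edge set `ET`. -/
noncomputable def intBd (ET : Finset (Sym2 V)) : Finset (Sym2 V) :=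
  ET.filter fun e => ∃ f ∈ extBd G ET, EdgeInc e f

/-- Degree of a vertex in the subtree with edge set `ET`. -/
noncomputable def degT (ET : Finset (Sym2 V)) (v : V) : ℕ :=
  (ET.filter fun e => v ∈ e).card

/-- An edge set is connected (spans a subtree, inside a forest) if any two of its edges are
linked by a chain of pairwise incident edges within the set. -/
def EdgeConnectedSet (ET : Finset (Sym2 V)) : Prop :=
  ∀ e ∈ ET, ∀ f ∈ ET,
    Relation.ReflTransGen (fun a b => a ∈ ET ∧ b ∈ ET ∧ EdgeInc a b) e f

/-- A splitting subtree (given by its nonempty connected edge set `ET`): either a single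
edge, or a subtree with fringe interior boundary of size at most 2 whose two interior
boundary edges (if there are two) are non-incident. -/
def IsSplitting (ET : Finset (Sym2 V)) : Prop :=
  ET ⊆ G.edgeFinset ∧ ET.Nonempty ∧ EdgeConnectedSet ET ∧
  (ET.card = 1 ∨
    ((∀ e ∈ intBd G ET, ∃ v : V, v ∈ e ∧ degT ET v = 1) ∧
     (intBd G ET).card ≤ 2 ∧
     ∀ e ∈ intBd G ET, ∀ f ∈ intBd G ET, e ≠ f → ¬ EdgeInc e f))

end Trees

section TreeBlocks

variable {V : Type} [Fintype V] [DecidableEq V] (G : SimpleGraph V) [DecidableRel G.Adj]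

/-- The block of edges hanging from the edge `e0`, relative to a set `R` of root vertices:
the edges of `ET` reachable from `e0` by chains of incident edges meeting at vertices
outside `R`. -/
noncomputable def hangBlock (ET : Finset (Sym2 V)) (R : Finset V) (e0 : Sym2 V) :
    Finset (Sym2 V) :=
  ET.filter fun f => Relation.ReflTransGen
    (fun a b => a ∈ ET ∧ b ∈ ET ∧ EdgeInc a b ∧ ∃ v : V, v ∈ a ∧ v ∈ b ∧ v ∉ R) e0 f

/-- Vertex-rooted block partition: `T` is rooted at an internal vertex `r0` of `T`, the
distinguished edges `roots i` are exactly the edges of `T` at `r0`, and each block is the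
subtree of `T` hanging from its distinguished edge. -/
def IsVertexRooted (ET : Finset (Sym2 V)) {r : ℕ}
    (blocks : Fin r → Finset (Sym2 V)) (roots : Fin r → Sym2 V) : Prop :=
  ∃ r0 : V, 2 ≤ degT ET r0 ∧ Function.Injective roots ∧
    (∀ i, roots i ∈ ET ∧ r0 ∈ roots i) ∧
    (∀ f ∈ ET, r0 ∈ f → ∃ i, roots i = f) ∧
    (∀ i, blocks i = hangBlock ET {r0} (roots i))

/-- Edge-rooted block partition: `T` is rooted at an edge `e` of `T`, not in the interior
boundary, with both endpoints internal to `T`; the blocks are `{e}` together with the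
subtrees hanging from each edge of `T` incident to `e`. -/
def IsEdgeRooted (ET : Finset (Sym2 V)) {r : ℕ}
    (blocks : Fin r → Finset (Sym2 V)) (roots : Fin r → Sym2 V) : Prop :=
  ∃ e : Sym2 V, e ∈ ET ∧ e ∉ intBd G ET ∧ (∀ v ∈ e, 2 ≤ degT ET v) ∧
    Function.Injective roots ∧
    (∃ i0, roots i0 = e ∧ blocks i0 = {e}) ∧
    (∀ i, roots i = e ∨ (roots i ∈ ET ∧ roots i ≠ e ∧ EdgeInc e (roots i) ∧
      blocks i = hangBlock (ET.erase e) (Finset.univ.filter fun v => v ∈ e) (roots i))) ∧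
    (∀ f ∈ ET, f ≠ e → EdgeInc e f → ∃ i, roots i = f)

/-- The tree block setting: a vertex-rooted or edge-rooted block partition. -/
def TreeBlockSetting (ET : Finset (Sym2 V)) {r : ℕ}
    (blocks : Fin r → Finset (Sym2 V)) (roots : Fin r → Sym2 V) : Prop :=
  IsVertexRooted ET blocks roots ∨ IsEdgeRooted G ET blocks roots

/-- `g_i`: the minimum over boundary conditions `σ ∈ Ω^μ_E` of the spectral gap of the
Glauber dynamics on the block `E_i`. -/
noncomputable def blockGapE (d : ℕ) (ET : Finset (Sym2 V)) (μ : Sym2 V → Fin (d + 1))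
    {r : ℕ} (blocks : Fin r → Finset (Sym2 V)) (i : Fin r) : ℝ :=
  sInf {x : ℝ | ∃ σ : OmegaE G (d + 1) ET μ,
    x = specGap (unif (OmegaE G (d + 1) (blocks i) σ.1)) (treeGen G (d + 1) (blocks i) σ.1)}

/-- `τ_i`: the maximum over boundary conditions `σ ∈ Ω^μ_E` of the relaxation time of the
Glauber dynamics on the block `E_i`. -/
noncomputable def blockTauE (d : ℕ) (ET : Finset (Sym2 V)) (μ : Sym2 V → Fin (d + 1))
    {r : ℕ} (blocks : Fin r → Finset (Sym2 V)) (i : Fin r) : ℝ :=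
  sSup {x : ℝ | ∃ σ : OmegaE G (d + 1) ET μ,
    x = relaxTime (unif (OmegaE G (d + 1) (blocks i) σ.1)) (treeGen G (d + 1) (blocks i) σ.1)}

/-- Restriction of a colouring in `Ω^μ_E` to `F = {e_1, …, e_r}` (the distinguished edges). -/
noncomputable def resE (d : ℕ) (ET : Finset (Sym2 V)) (μ : Sym2 V → Fin (d + 1))
    {r : ℕ} (roots : Fin r → Sym2 V) (σ : OmegaE G (d + 1) ET μ) : Fin r → Fin (d + 1) :=
  fun i => σ.1 (roots i)

/-- The projection `π_𝓡` onto `F` of the uniform distribution on `Ω^μ_E`. -/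
noncomputable def piRE (d : ℕ) (ET : Finset (Sym2 V)) (μ : Sym2 V → Fin (d + 1))
    {r : ℕ} (roots : Fin r → Sym2 V)
    (σh : ↥(Set.range (resE G d ET μ roots))) : ℝ :=
  (Fintype.card {σ : OmegaE G (d + 1) ET μ // resE G d ET μ roots σ = σh.1} : ℝ) /
  (Fintype.card (OmegaE G (d + 1) ET μ) : ℝ)

/-- `π^{i,σ̂}_proj(η̂)`: for an arbitrary extension `σ` of `σ̂`, the probability under the
uniform distribution on `Ω^σ_{E_i}` that the restriction to `F` equals `η̂`. -/
noncomputable def projE (d : ℕ) (ET : Finset (Sym2 V)) (μ : Sym2 V → Fin (d + 1))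
    {r : ℕ} (blocks : Fin r → Finset (Sym2 V)) (roots : Fin r → Sym2 V) (i : Fin r)
    (σh : ↥(Set.range (resE G d ET μ roots))) (ηh : Fin r → Fin (d + 1)) : ℝ :=
  (Fintype.card {ξ : OmegaE G (d + 1) (blocks i)
      (Classical.choose (Set.mem_range.mp σh.2)).1 //
      ∀ j : Fin r, ξ.1 (roots j) = ηh j} : ℝ) /
  (Fintype.card (OmegaE G (d + 1) (blocks i)
      (Classical.choose (Set.mem_range.mp σh.2)).1) : ℝ)

/-- Off-diagonal entries of the reduced block dynamics `𝓡^μ_𝓔`. -/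
noncomputable def redOffE (d : ℕ) (ET : Finset (Sym2 V)) (μ : Sym2 V → Fin (d + 1))
    {r : ℕ} (blocks : Fin r → Finset (Sym2 V)) (roots : Fin r → Sym2 V)
    (σh ηh : ↥(Set.range (resE G d ET μ roots))) : ℝ :=
  ∑ i : Fin r,
    if ∀ j : Fin r, j ≠ i → σh.1 j = ηh.1 j then
      blockGapE G d ET μ blocks i * projE G d ET μ blocks roots i σh ηh.1
    else 0

/-- The reduced block dynamics `𝓡^μ_𝓔` on `Ω_𝓡 = {σ|_F : σ ∈ Ω^μ_E}`. -/
noncomputable def redDynE (d : ℕ) (ET : Finset (Sym2 V)) (μ : Sym2 V → Fin (d + 1))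
    {r : ℕ} (blocks : Fin r → Finset (Sym2 V)) (roots : Fin r → Sym2 V) :
    ↥(Set.range (resE G d ET μ roots)) → ↥(Set.range (resE G d ET μ roots)) → ℝ :=
  fun σh ηh =>
    if σh = ηh then
      -∑ ηh' ∈ Finset.univ.filter fun b => b ≠ σh, redOffE G d ET μ blocks roots σh ηh'
    else redOffE G d ET μ blocks roots σh ηh

end TreeBlocks

/-! ### Switching colours on sets of edges -/

section Switching

theorem EdgeInc.comm {V : Type} {e f : Sym2 V} (h : EdgeInc e f) : EdgeInc f e := by
  obtain ⟨h1, v, h2, h3⟩ := h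
  exact ⟨h1.symm, v, h3, h2⟩

variable {V : Type} [Fintype V] [DecidableEq V]

/-- Sets of edges on which colours may be switched. The set `A i` is recoloured by a transposition
in order to change the colour of `roots i`. The indices in `S` are those whose block meets the
interior boundary of the tree away from `roots i`; for these, `h i` is the only edge at which
`A i` can clash with the remaining edges of the tree. The set `D i` contains `h i` and is
recoloured in order to change the colour of `h i`; it can only clash with `roots i` and `q i`. -/
structure SwitchData (G : SimpleGraph V) (ET : Finset (Sym2 V)) {r : ℕ} (roots : Fin r → Sym2 V)
    (A D : Fin r → Set (Sym2 V)) (S : Finset (Fin r)) (h q : Fin r → Sym2 V) : Prop where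
  root_edge : ∀ i, roots i ∈ G.edgeSet
  root_mem : ∀ i, roots i ∈ A i
  A_sub : ∀ i, ∀ f ∈ A i, f ∈ ET
  A_disj : ∀ i j, ∀ f ∈ A i, f ∈ A j → i = j
  A_A : ∀ i j, i ≠ j → ∀ f ∈ A i, ∀ g ∈ A j, EdgeInc f g → f = roots i ∧ g = roots j
  A_out : ∀ i, ∀ f ∈ A i, ∀ g ∈ G.edgeSet, (∀ j, g ∉ A j) → EdgeInc f g →
    (f = roots i ∧ g ∉ ET) ∨ (i ∈ S ∧ g = h i)
  h_edge : ∀ i ∈ S, h i ∈ G.edgeSet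
  h_inc : ∀ i ∈ S, EdgeInc (roots i) (h i)
  D_sub : ∀ i ∈ S, ∀ f ∈ D i, f ∈ ET
  h_mem : ∀ i ∈ S, h i ∈ D i
  q_edge : ∀ i ∈ S, q i ∈ G.edgeSet
  q_inc : ∀ i ∈ S, EdgeInc (h i) (q i)
  D_out : ∀ i ∈ S, ∀ f ∈ D i, ∀ g ∈ G.edgeSet, g ∉ D i → EdgeInc f g → g = roots i ∨ g = q i
  root_notMem : ∀ i ∈ S, ∀ j, roots j ∉ D i
  h_notMem : ∀ i ∈ S, ∀ j ∈ S, j ≠ i → h j ∉ D i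

variable {G : SimpleGraph V} {d : ℕ} {ET : Finset (Sym2 V)}
  {μ : Sym2 V → Fin (d + 1)} {r : ℕ} {roots : Fin r → Sym2 V}
  {A D : Fin r → Set (Sym2 V)} {S : Finset (Fin r)} {h q : Fin r → Sym2 V}

/-- The colourings projecting to `a` for which, for each `i ∈ S'`, the edge `h i` does not have
the colour `b i`. -/
noncomputable def goodSet (G : SimpleGraph V) (ET : Finset (Sym2 V)) (μ : Sym2 V → Fin (d + 1))
    (roots h : Fin r → Sym2 V) (a b : Fin r → Fin (d + 1)) (S' : Finset (Fin r)) :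
    Finset (OmegaE G (d + 1) ET μ) :=
  Finset.univ.filter fun σ => resE G d ET μ roots σ = a ∧ ∀ i ∈ S', σ.1 (h i) ≠ b i

/-- Swapping `a i` and `b i` on `A i`, simultaneously for all `i`, maps the colourings over `a`
that are good for all `i ∈ S` injectively to colourings over `b`. -/
theorem card_goodSet_le (X : SwitchData G ET roots A D S h q) (η : OmegaE G (d + 1) ET μ)
    (a : Fin r → Fin (d + 1)) :
    (goodSet G ET μ roots h a (resE G d ET μ roots η) S).card ≤
      (goodSet G ET μ roots h (resE G d ET μ roots η) a ∅).card := by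
  have hP : ∃ P : Sym2 V → Equiv.Perm (Fin (d + 1)),
      (∀ i, ∀ f ∈ A i, P f = Equiv.swap (a i) (η.1 (roots i))) ∧
      (∀ f, (∀ i, f ∉ A i) → P f = 1) := by
    refine ⟨fun f => if hf : ∃ i, f ∈ A i then
      Equiv.swap (a hf.choose) (η.1 (roots hf.choose)) else 1, ?_, ?_⟩
    · intro i f hf
      have hex : ∃ i, f ∈ A i := ⟨i, hf⟩
      have : hex.choose = i := X.A_disj _ _ f hex.choose_spec hf
      simp only [dif_pos hex, this]
    · intro f hf
      have hex : ¬ ∃ i, f ∈ A i := by simpa using hf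
      simp only [dif_neg hex]
  obtain ⟨P, hP1, hP2⟩ := hP
  have key : ∀ σ ∈ goodSet G ET μ roots h a (resE G d ET μ roots η) S,
      ProperECol G (fun f => P f (σ.1 f)) ∧ ∀ e ∉ ET, P e (σ.1 e) = μ e := by
    intro σ hσ
    simp only [goodSet, Finset.mem_filter, Finset.mem_univ, true_and] at hσ
    obtain ⟨hσa, hσg⟩ := hσ
    have hroot : ∀ i, P (roots i) (σ.1 (roots i)) = η.1 (roots i) := by
      intro i
      rw [hP1 i _ (X.root_mem i)]
      have : σ.1 (roots i) = a i := congrFun hσa i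
      rw [this, Equiv.swap_apply_left]
    have hout : ∀ g, (∀ i, g ∉ A i) → P g (σ.1 g) = σ.1 g := by
      intro g hg; rw [hP2 g hg]; rfl
    -- the asymmetric case, in which only one of two incident edges is recoloured
    have hcross : ∀ i, ∀ f ∈ A i, f ∈ G.edgeSet → ∀ g ∈ G.edgeSet, (∀ j, g ∉ A j) →
        EdgeInc f g → P f (σ.1 f) ≠ P g (σ.1 g) := by
      intro i f hf hfG g hgG hg hinc
      rw [hout g hg]
      rcases X.A_out i f hf g hgG hg hinc with ⟨rfl, hgE⟩ | ⟨hi, rfl⟩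
      · rw [hroot i, σ.2.2 g hgE, ← η.2.2 g hgE]
        exact η.2.1 _ hfG _ hgG hinc
      · have h1 : σ.1 (h i) ≠ a i := by
          have : σ.1 (roots i) = a i := congrFun hσa i
          rw [← this]
          exact (σ.2.1 _ (X.root_edge i) _ hgG (X.h_inc i hi)).symm
        have h2 : σ.1 (h i) ≠ η.1 (roots i) := hσg i hi
        rw [hP1 i f hf, ← Equiv.swap_apply_of_ne_of_ne h1 h2]
        exact fun hh => σ.2.1 _ hfG _ hgG hinc ((Equiv.injective _) hh)
    constructor
    · intro f hfG g hgG hinc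
      by_cases hf : ∃ i, f ∈ A i
      · obtain ⟨i, hf⟩ := hf
        by_cases hg : ∃ j, g ∈ A j
        · obtain ⟨j, hg⟩ := hg
          by_cases hij : i = j
          · subst hij
            simp only [hP1 i f hf, hP1 i g hg]
            exact fun hh => σ.2.1 _ hfG _ hgG hinc ((Equiv.injective _) hh)
          · obtain ⟨rfl, rfl⟩ := X.A_A i j hij f hf g hg hinc
            simp only [hroot]
            exact η.2.1 _ hfG _ hgG hinc
        · exact hcross i f hf hfG g hgG (by simpa using hg) hinc
      · by_cases hg : ∃ j, g ∈ A j
        · obtain ⟨j, hg⟩ := hg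
          exact (hcross j g hg hgG f hfG (by simpa using hf) hinc.comm).symm
        · simp only [hout f (by simpa using hf), hout g (by simpa using hg)]
          exact σ.2.1 _ hfG _ hgG hinc
    · intro e he
      rw [hout e fun i hi => he (X.A_sub i e hi)]
      exact σ.2.2 e he
  refine Finset.card_le_card_of_injOn
    (fun σ => if hσ : σ ∈ goodSet G ET μ roots h a (resE G d ET μ roots η) S then
      ⟨fun f => P f (σ.1 f), key σ hσ⟩ else σ) ?_ ?_
  · intro σ hσ
    have hσ' := Finset.mem_coe.mp hσ
    simp only [dif_pos hσ']
    simp only [goodSet, Finset.mem_univ, true_and, Finset.coe_filter,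
      Set.mem_ofPred_eq] at hσ ⊢
    refine ⟨?_, by simp⟩
    funext i
    simp only [resE]
    have : σ.1 (roots i) = a i := congrFun hσ.1 i
    rw [hP1 i _ (X.root_mem i), this, Equiv.swap_apply_left]
  · intro σ hσ τ hτ hst
    simp only [dif_pos (Finset.mem_coe.mp hσ), dif_pos (Finset.mem_coe.mp hτ)] at hst
    apply Subtype.ext
    funext f
    have := congrFun (congrArg Subtype.val hst) f
    exact (P f).injective this

/-- If `h i` has the forbidden colour `b i`, at least `d - 2` other colours can be given to it by
a transposition on `D i`, and the original colouring can be recovered from the result. Hence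
colourings that are good for `i` outnumber the others by a factor of `d - 2`. -/
theorem card_bad_mul_le (X : SwitchData G ET roots A D S h q) (a b : Fin r → Fin (d + 1))
    (S' : Finset (Fin r)) (hS' : S' ⊆ S) (i : Fin r) (hi : i ∈ S) (hi' : i ∉ S') :
    ((goodSet G ET μ roots h a b S').filter fun σ => σ.1 (h i) = b i).card * (d - 2) ≤
      (goodSet G ET μ roots h a b (insert i S')).card * 1 := by
  refine Finset.card_mul_le_card_mul
    (fun σ τ => (∀ f ∈ D i, τ.1 f = Equiv.swap (b i) (τ.1 (h i)) (σ.1 f)) ∧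
      ∀ f ∉ D i, τ.1 f = σ.1 f) ?_ ?_
  · intro σ hσ
    simp only [goodSet, Finset.mem_filter, Finset.mem_univ, true_and] at hσ
    obtain ⟨⟨hσa, hσg⟩, hσb⟩ := hσ
    have hroot : ∀ j, σ.1 (roots j) = a j := fun j => congrFun hσa j
    have hab : a i ≠ b i := by
      rw [← hroot i, ← hσb]
      exact σ.2.1 _ (X.root_edge i) _ (X.h_edge i hi) (X.h_inc i hi)
    have hqb : σ.1 (q i) ≠ b i := by
      rw [← hσb]
      exact (σ.2.1 _ (X.h_edge i hi) _ (X.q_edge i hi) (X.q_inc i hi)).symm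
    -- the recoloured configuration with new colour `c` at `h i`
    have key : ∀ c ∈ ({a i, b i, σ.1 (q i)} : Finset (Fin (d + 1)))ᶜ,
        ∃ τ : OmegaE G (d + 1) ET μ, τ.1 (h i) = c ∧
          (∀ f ∈ D i, τ.1 f = Equiv.swap (b i) c (σ.1 f)) ∧ ∀ f ∉ D i, τ.1 f = σ.1 f := by
      intro c hc
      simp only [Finset.mem_compl, Finset.mem_insert, Finset.mem_singleton, not_or] at hc
      obtain ⟨hca, hcb, hcq⟩ := hc
      let τ : Sym2 V → Fin (d + 1) := fun f =>
        if f ∈ D i then Equiv.swap (b i) c (σ.1 f) else σ.1 f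
      have hin : ∀ f ∈ D i, τ f = Equiv.swap (b i) c (σ.1 f) := fun f hf => if_pos hf
      have hout : ∀ f ∉ D i, τ f = σ.1 f := fun f hf => if_neg hf
      have hcross : ∀ f ∈ D i, f ∈ G.edgeSet → ∀ g ∈ G.edgeSet, g ∉ D i → EdgeInc f g →
          τ f ≠ τ g := by
        intro f hf hfG g hgG hg hinc
        rw [hin f hf, hout g hg]
        have hfix : Equiv.swap (b i) c (σ.1 g) = σ.1 g := by
          rcases X.D_out i hi f hf g hgG hg hinc with rfl | rfl
          · rw [hroot]; exact Equiv.swap_apply_of_ne_of_ne hab (Ne.symm hca)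
          · exact Equiv.swap_apply_of_ne_of_ne hqb (Ne.symm hcq)
        rw [← hfix]
        exact fun hh => σ.2.1 _ hfG _ hgG hinc ((Equiv.injective _) hh)
      refine ⟨⟨τ, ?_, ?_⟩, ?_, hin, hout⟩
      · intro f hfG g hgG hinc
        by_cases hf : f ∈ D i
        · by_cases hg : g ∈ D i
          · rw [hin f hf, hin g hg]
            exact fun hh => σ.2.1 _ hfG _ hgG hinc ((Equiv.injective _) hh)
          · exact hcross f hf hfG g hgG hg hinc
        · by_cases hg : g ∈ D i
          · exact (hcross g hg hgG f hfG hf hinc.comm).symm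
          · rw [hout f hf, hout g hg]
            exact σ.2.1 _ hfG _ hgG hinc
      · intro e he
        rw [hout e fun h' => he (X.D_sub i hi e h')]
        exact σ.2.2 e he
      · change τ (h i) = c
        rw [hin _ (X.h_mem i hi), hσb, Equiv.swap_apply_left]
    have : Nonempty (OmegaE G (d + 1) ET μ) := ⟨σ⟩
    choose! τ hτh hτin hτout using key
    have hcard : d - 2 ≤ (({a i, b i, σ.1 (q i)} : Finset (Fin (d + 1)))ᶜ).card := by
      rw [Finset.card_compl, Fintype.card_fin]
      have : ({a i, b i, σ.1 (q i)} : Finset (Fin (d + 1))).card ≤ 3 := Finset.card_le_three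
      omega
    refine hcard.trans (Finset.card_le_card_of_injOn τ ?_ ?_)
    · intro c hc
      have hc' := Finset.mem_coe.mp hc
      simp only [Finset.mem_compl, Finset.mem_insert, Finset.mem_singleton, not_or] at hc'
      simp only [Finset.bipartiteAbove, goodSet, Finset.coe_filter, Finset.mem_filter,
        Finset.mem_univ, true_and, Set.mem_ofPred_eq, Finset.mem_insert]
      refine ⟨⟨?_, ?_⟩, ?_, ?_⟩
      · funext j
        simp only [resE]
        rw [hτout c hc _ (X.root_notMem i hi j), hroot]
      · rintro j (rfl | hj)
        · rw [hτh c hc]; exact hc'.2.1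
        · rw [hτout c hc _ (X.h_notMem i hi j (hS' hj) (by rintro rfl; exact hi' hj))]
          exact hσg j hj
      · rw [hτh c hc]; exact hτin c hc
      · exact hτout c hc
    · intro c hc c' hc' hcc
      rw [← hτh c hc, ← hτh c' hc', hcc]
  · intro τ hτ
    rw [Finset.card_le_one]
    intro σ hσ σ' hσ'
    simp only [Finset.bipartiteBelow, Finset.mem_filter] at hσ hσ'
    apply Subtype.ext
    funext f
    by_cases hf : f ∈ D i
    · have := (hσ.2.1 f hf).symm.trans (hσ'.2.1 f hf)
      exact (Equiv.injective _) this
    · exact (hσ.2.2 f hf).symm.trans (hσ'.2.2 f hf)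

theorem card_goodSet_insert (X : SwitchData G ET roots A D S h q) (hd : 3 ≤ d)
    (a b : Fin r → Fin (d + 1))
    (S' : Finset (Fin r)) (hS' : S' ⊆ S) (i : Fin r) (hi : i ∈ S) (hi' : i ∉ S') :
    (goodSet G ET μ roots h a b S').card * (d - 2) ≤
      (goodSet G ET μ roots h a b (insert i S')).card * (d - 1) := by
  have h1 := card_bad_mul_le (μ := μ) X a b S' hS' i hi hi'
  have h2 := Finset.card_filter_add_card_filter_not (s := goodSet G ET μ roots h a b S')
    (fun σ => σ.1 (h i) = b i)
  have h3 : ((goodSet G ET μ roots h a b S').filter fun σ => ¬ σ.1 (h i) = b i) =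
      goodSet G ET μ roots h a b (insert i S') := by
    ext σ
    simp only [goodSet, Finset.mem_filter, Finset.mem_univ, true_and, Finset.mem_insert,
      forall_eq_or_imp]
    tauto
  rw [h3] at h2
  rw [← h2, add_mul]
  have : d - 1 = 1 + (d - 2) := by omega
  rw [this, mul_add]
  omega

/-- Any two fibres of the projection onto the roots have sizes differing by a factor at most
`((d - 1) / (d - 2)) ^ 2`. -/
theorem card_fibre_le (X : SwitchData G ET roots A D S h q) (hd : 3 ≤ d) (hS : S.card ≤ 2)
    (a : Fin r → Fin (d + 1)) (η : OmegaE G (d + 1) ET μ) :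
    (Finset.univ.filter fun σ : OmegaE G (d + 1) ET μ => resE G d ET μ roots σ = a).card *
        (d - 2) ^ 2 ≤
      (Finset.univ.filter fun σ : OmegaE G (d + 1) ET μ =>
        resE G d ET μ roots σ = resE G d ET μ roots η).card * (d - 1) ^ 2 := by
  have hE : ∀ a b : Fin r → Fin (d + 1), goodSet G ET μ roots h a b ∅ =
      Finset.univ.filter fun σ : OmegaE G (d + 1) ET μ => resE G d ET μ roots σ = a := by
    intro a b; simp [goodSet]
  have ind : ∀ S' : Finset (Fin r), S' ⊆ S →
      (goodSet G ET μ roots h a (resE G d ET μ roots η) ∅).card * (d - 2) ^ S'.card ≤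
      (goodSet G ET μ roots h a (resE G d ET μ roots η) S').card * (d - 1) ^ S'.card := by
    intro S'
    induction S' using Finset.induction_on with
    | empty => intro _; simp
    | insert i S' hi ih =>
      intro hsub
      have ih := ih fun x hx => hsub (Finset.mem_insert_of_mem hx)
      have hstep := card_goodSet_insert (μ := μ) X hd a (resE G d ET μ roots η) S'
        (fun x hx => hsub (Finset.mem_insert_of_mem hx)) i (hsub (Finset.mem_insert_self _ _)) hi
      rw [Finset.card_insert_of_notMem hi, pow_succ, pow_succ]
      calc _ = ((goodSet G ET μ roots h a (resE G d ET μ roots η) ∅).card *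
                (d - 2) ^ S'.card) * (d - 2) := by ring
        _ ≤ ((goodSet G ET μ roots h a (resE G d ET μ roots η) S').card *
                (d - 1) ^ S'.card) * (d - 2) := Nat.mul_le_mul_right _ ih
        _ = ((goodSet G ET μ roots h a (resE G d ET μ roots η) S').card * (d - 2)) *
                (d - 1) ^ S'.card := by ring
        _ ≤ _ := Nat.mul_le_mul_right _ hstep
        _ = _ := by ring
  have h1 := ind S (Finset.Subset.refl _)
  have h2 := card_goodSet_le (μ := μ) X η a
  rw [hE] at h1 h2
  set N := (Finset.univ.filter fun σ : OmegaE G (d + 1) ET μ => resE G d ET μ roots σ = a).card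
  have h3 := h1.trans (Nat.mul_le_mul_right _ h2)
  obtain ⟨t, ht⟩ := Nat.exists_eq_add_of_le hS
  have hp : ∀ x : ℕ, x ^ 2 = x ^ S.card * x ^ t := fun x => by rw [← pow_add, ← ht]
  rw [hp, hp, ← mul_assoc, ← mul_assoc]
  exact Nat.mul_le_mul h3 (Nat.pow_le_pow_left (by omega) _)

end Switching

/-! ### Rooted trees -/

section Rooting

/-- A rooting of `G` at `ρ`: a parent function `p` with a depth `dep` that decreases along it, such
that `v ↦ s(v, p v)` is a bijection from the vertices other than `ρ` to the edges, with inverse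
`ch`, the lower endpoint of an edge. The values of `p` at `ρ` and of `ch` off the edges are
arbitrary. -/
structure Rooting {V : Type} (G : SimpleGraph V) (ρ : V) where
  p : V → V
  dep : V → ℕ
  ch : Sym2 V → V
  dep_p : ∀ v, v ≠ ρ → dep (p v) + 1 = dep v
  edge : ∀ v, v ≠ ρ → s(v, p v) ∈ G.edgeSet
  ch_ne : ∀ e ∈ G.edgeSet, ch e ≠ ρ
  eq_ch : ∀ e ∈ G.edgeSet, e = s(ch e, p (ch e))
  ch_edge : ∀ v, v ≠ ρ → ch s(v, p v) = v

/-- Every finite tree can be rooted at every vertex: the edges `s(v, p v)` are distinct, and there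
are as many of them as there are edges in the tree. -/
theorem exists_rooting {V : Type} [Fintype V] [DecidableEq V] (G : SimpleGraph V)
    [DecidableRel G.Adj] (hG : G.IsTree) (ρ : V) : Nonempty (Rooting G ρ) := by
  have hp : ∀ v, ∃ w, v ≠ ρ → G.Adj v w ∧ G.dist w ρ + 1 = G.dist v ρ := by
    intro v
    by_cases hv : v = ρ
    · exact ⟨v, fun h => absurd hv h⟩
    · obtain ⟨W, hW⟩ := hG.connected.exists_walk_length_eq_dist v ρ
      cases W with
      | nil => exact absurd rfl hv
      | @cons _ w _ hadj W' =>
        refine ⟨w, fun _ => ⟨hadj, ?_⟩⟩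
        rw [SimpleGraph.Walk.length_cons] at hW
        have h1 := SimpleGraph.dist_le W'
        have h2 := hG.connected.dist_triangle (u := v) (v := w) (w := ρ)
        rw [SimpleGraph.dist_eq_one_iff_adj.mpr hadj] at h2
        omega
  choose p hp using hp
  have hinj : ∀ v w, v ≠ ρ → w ≠ ρ → s(v, p v) = s(w, p w) → v = w := by
    intro v w hv hw h
    rw [Sym2.eq_iff] at h
    rcases h with h | ⟨h1, h2⟩
    · exact h.1
    · have e1 := (hp v hv).2
      have e2 := (hp w hw).2
      rw [h2] at e1
      rw [← h1] at e2
      omega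
  have himg : (Finset.univ.erase ρ).image (fun v => s(v, p v)) = G.edgeFinset := by
    apply Finset.eq_of_subset_of_card_le
    · intro e he
      obtain ⟨v, hv, rfl⟩ := Finset.mem_image.mp he
      rw [SimpleGraph.mem_edgeFinset, SimpleGraph.mem_edgeSet]
      exact (hp v (Finset.ne_of_mem_erase hv)).1
    · rw [Finset.card_image_of_injOn, Finset.card_erase_of_mem (Finset.mem_univ _),
        Finset.card_univ]
      · have := hG.card_edgeFinset
        omega
      · intro v hv w hw h
        exact hinj v w (Finset.ne_of_mem_erase hv) (Finset.ne_of_mem_erase hw) h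
  have hch : ∀ e, ∃ v, e ∈ G.edgeSet → v ≠ ρ ∧ e = s(v, p v) := by
    intro e
    by_cases he : e ∈ G.edgeSet
    · rw [← SimpleGraph.mem_edgeFinset, ← himg] at he
      obtain ⟨v, hv, rfl⟩ := Finset.mem_image.mp he
      exact ⟨v, fun _ => ⟨Finset.ne_of_mem_erase hv, rfl⟩⟩
    · exact ⟨ρ, fun h => absurd h he⟩
  choose ch hch using hch
  have hedge : ∀ v, v ≠ ρ → s(v, p v) ∈ G.edgeSet := fun v hv => (hp v hv).1
  exact ⟨⟨p, fun v => G.dist v ρ, ch, fun v hv => (hp v hv).2, hedge,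
    fun e he => (hch e he).1, fun e he => (hch e he).2,
    fun v hv => (hinj _ _ hv (hch _ (hedge v hv)).1 (hch _ (hedge v hv)).2).symm⟩⟩

namespace Rooting

variable {V : Type} {G : SimpleGraph V} {ρ : V} (Y : Rooting G ρ)

/-- `v` is an ancestor of `w`, possibly `w` itself. -/
def Below (v w : V) : Prop := Relation.ReflTransGen (fun a b => a ≠ ρ ∧ b = Y.p a) w v

variable {Y}

theorem Below.refl (v : V) : Y.Below v v := Relation.ReflTransGen.refl

theorem Below.of_parent {v w : V} (hw : w ≠ ρ) (h : Y.Below v (Y.p w)) : Y.Below v w :=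
  Relation.ReflTransGen.head ⟨hw, rfl⟩ h

theorem Below.cases {v w : V} (h : Y.Below v w) : w = v ∨ (w ≠ ρ ∧ Y.Below v (Y.p w)) := by
  rcases Relation.ReflTransGen.cases_head h with h | ⟨c, ⟨h1, rfl⟩, h2⟩
  · exact Or.inl h
  · exact Or.inr ⟨h1, h2⟩

theorem Below.trans {u v w : V} (h : Y.Below u v) (h' : Y.Below v w) : Y.Below u w :=
  Relation.ReflTransGen.trans h' h

theorem Below.dep_le {v w : V} (h : Y.Below v w) : Y.dep v ≤ Y.dep w := by
  induction h with
  | refl => exact le_rfl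
  | tail _ h ih => obtain ⟨h1, rfl⟩ := h; have := Y.dep_p _ h1; omega

theorem Below.ne_root {v w : V} (hv : v ≠ ρ) (h : Y.Below v w) : w ≠ ρ := by
  rcases h.cases with rfl | h
  · exact hv
  · exact h.1

theorem Below.total {u v w : V} (h : Y.Below u w) (h' : Y.Below v w) :
    Y.Below u v ∨ Y.Below v u := by
  rcases Relation.ReflTransGen.total_of_right_unique (r := fun a b => a ≠ ρ ∧ b = Y.p a)
    (by rintro a b c ⟨_, rfl⟩ ⟨_, rfl⟩; rfl) h h' with h | h
  · exact Or.inr h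
  · exact Or.inl h

/-- A proper descendant of `v` lies below a child of `v`. -/
theorem Below.exists_child {v w : V} (h : Y.Below v w) (hne : w ≠ v) :
    ∃ u, u ≠ ρ ∧ Y.p u = v ∧ Y.Below u w := by
  rcases Relation.ReflTransGen.cases_tail h with h | ⟨u, h1, h2, h3⟩
  · exact absurd h.symm hne
  · exact ⟨u, h2, h3.symm, h1⟩

theorem not_below_parent {v : V} (hv : v ≠ ρ) : ¬ Y.Below v (Y.p v) := by
  intro h
  have := h.dep_le
  have := Y.dep_p v hv
  omega

theorem mem_edge {e : Sym2 V} (he : e ∈ G.edgeSet) {x : V} :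
    x ∈ e ↔ x = Y.ch e ∨ x = Y.p (Y.ch e) := by
  conv_lhs => rw [Y.eq_ch e he]
  exact Sym2.mem_iff

theorem ch_inj {e f : Sym2 V} (he : e ∈ G.edgeSet) (hf : f ∈ G.edgeSet) (h : Y.ch e = Y.ch f) :
    e = f := by
  rw [Y.eq_ch e he, Y.eq_ch f hf, h]

/-- The set of edges with lower endpoint `v` or below is only left through the edge `s(v, p v)`. -/
theorem ch_eq_of_leave {e f : Sym2 V} (he : e ∈ G.edgeSet) (hf : f ∈ G.edgeSet)
    (hinc : EdgeInc e f) {v : V} (h : Y.Below v (Y.ch e)) (h' : ¬ Y.Below v (Y.ch f)) :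
    Y.ch e = v := by
  by_contra hne
  obtain ⟨_, x, hxe, hxf⟩ := hinc
  have h2 : Y.Below v (Y.p (Y.ch e)) := by
    rcases h.cases with h | h
    · exact absurd h hne
    · exact h.2
  have hx : Y.Below v x := by
    rcases (mem_edge (Y := Y) he).mp hxe with rfl | rfl
    · exact h
    · exact h2
  rcases (mem_edge (Y := Y) hf).mp hxf with rfl | rfl
  · exact h' hx
  · exact h' (hx.of_parent (Y.ch_ne f hf))

/-- The lower endpoint of an edge touching `v` is `v` or one of its descendants. -/
theorem below_of_mem {f : Sym2 V} (hf : f ∈ G.edgeSet) {v : V} (hv : v ∈ f) :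
    Y.Below v (Y.ch f) := by
  rcases (mem_edge (Y := Y) hf).mp hv with rfl | rfl
  · exact Below.refl _
  · exact (Below.refl _).of_parent (Y.ch_ne f hf)

/-- In a connected edge set, the parent edge of an edge belongs to the set as soon as some edge
of the set is not contained in the subtree under the connecting vertex. -/
theorem parent_mem {ET : Finset (Sym2 V)} (hE : ∀ e ∈ ET, e ∈ G.edgeSet)
    (hconn : EdgeConnectedSet ET) {f e0 : Sym2 V} (hf : f ∈ ET) (he0 : e0 ∈ ET)
    (h0 : ¬ Y.Below (Y.p (Y.ch f)) (Y.p (Y.ch e0))) (hu : Y.p (Y.ch f) ≠ ρ) :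
    s(Y.p (Y.ch f), Y.p (Y.p (Y.ch f))) ∈ ET := by
  by_contra hno
  have : ∀ g, Relation.ReflTransGen (fun a b => a ∈ ET ∧ b ∈ ET ∧ EdgeInc a b) f g →
      Y.Below (Y.p (Y.ch f)) (Y.p (Y.ch g)) := by
    intro g hg
    induction hg with
    | refl => exact Below.refl _
    | @tail a b _ hab ih =>
      obtain ⟨ha, hb, hinc⟩ := hab
      have ha' := ih.of_parent (Y.ch_ne a (hE a ha))
      by_cases hbb : Y.Below (Y.p (Y.ch f)) (Y.ch b)
      · rcases hbb.cases with h | h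
        · exfalso
          apply hno
          rw [← h, ← Y.eq_ch b (hE b hb)]
          exact hb
        · exact h.2
      · have := ch_eq_of_leave (hE a ha) (hE b hb) hinc ha' hbb
        rw [this] at ih
        exact absurd ih (not_below_parent hu)
  exact h0 (this e0 (hconn f hf e0 he0))

end Rooting

end Rooting

/-! ### Switching sets inside the blocks -/

section Blocks

variable {V : Type} [Fintype V] [DecidableEq V] {G : SimpleGraph V} [DecidableRel G.Adj] {ρ : V}

theorem mem_intBd_of_inc {ET : Finset (Sym2 V)} {f g : Sym2 V} (hf : f ∈ ET)
    (hg : g ∈ G.edgeSet) (hg' : g ∉ ET) (hinc : EdgeInc f g) : f ∈ intBd G ET := by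
  simp only [intBd, extBd, Finset.mem_filter, Finset.mem_sdiff, SimpleGraph.mem_edgeFinset]
  exact ⟨hf, g, ⟨⟨hg, hg'⟩, f, hf, hinc.comm⟩, hinc⟩

/-- The root `roots i` meets no edges of the tree other than roots: its block can be recoloured at
the root alone. -/
def IsLeafy (ET : Finset (Sym2 V)) {r : ℕ} (roots : Fin r → Sym2 V) (i : Fin r) : Prop :=
  ∀ g ∈ ET, EdgeInc (roots i) g → ∃ j, g = roots j

/-- The properties of a block hanging from `roots i` when this edge is not in the interior boundary
of the tree: the block meets the interior boundary in at most one edge, and this edge is not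
incident to `roots i`. -/
structure IsBranch (Y : Rooting G ρ) (ET : Finset (Sym2 V)) {r : ℕ} (roots : Fin r → Sym2 V)
    (i : Fin r) : Prop where
  not_bd : roots i ∉ intBd G ET
  root_not_below : ∀ j, j ≠ i → ¬ Y.Below (Y.ch (roots i)) (Y.ch (roots j))
  nbr : ∀ g ∈ ET, EdgeInc (roots i) g → ¬ Y.Below (Y.ch (roots i)) (Y.ch g) → ∃ j, g = roots j
  bd : ∀ b ∈ intBd G ET, Y.Below (Y.ch (roots i)) (Y.ch b) → ¬ EdgeInc (roots i) b ∧
    ∀ b' ∈ intBd G ET, Y.Below (Y.ch (roots i)) (Y.ch b') → b' = b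

/-- The part of `SwitchData` concerning a single index `i`; `bad` says whether `i` belongs to
the exceptional set. -/
structure LocalData (Y : Rooting G ρ) (ET : Finset (Sym2 V)) {r : ℕ} (roots : Fin r → Sym2 V)
    (i : Fin r) (A D : Set (Sym2 V)) (bad : Prop) (h q : Sym2 V) : Prop where
  root_mem : roots i ∈ A
  A_sub : ∀ f ∈ A, f ∈ ET
  A_below : ∀ f ∈ A, f = roots i ∨
    (IsBranch Y ET roots i ∧ Y.Below (Y.ch (roots i)) (Y.ch f))
  A_out : ∀ f ∈ A, ∀ g ∈ G.edgeSet, g ∉ A → EdgeInc f g →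
    (f = roots i ∧ g ∉ ET) ∨ (f = roots i ∧ ∃ j, g = roots j) ∨ (bad ∧ g = h)
  branch : bad → IsBranch Y ET roots i
  h_edge : bad → h ∈ ET
  h_inc : bad → EdgeInc (roots i) h
  h_below : bad → Y.Below (Y.ch (roots i)) (Y.ch h)
  D_sub : bad → ∀ f ∈ D, f ∈ ET
  D_below : bad → ∀ f ∈ D, Y.Below (Y.ch (roots i)) (Y.ch f)
  h_mem : bad → h ∈ D
  root_notMem : bad → roots i ∉ D
  q_edge : bad → q ∈ G.edgeSet
  q_inc : bad → EdgeInc h q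
  D_out : bad → ∀ f ∈ D, ∀ g ∈ G.edgeSet, g ∉ D → EdgeInc f g → g = roots i ∨ g = q
  bd : bad → ∃ b ∈ intBd G ET, Y.Below (Y.ch (roots i)) (Y.ch b)

/-- If the block of `roots i` contains an interior boundary edge `b`, then `h` and `q` are the
second and third edges on the path from `roots i` to `b`; the sets `A` and `D` consist of the
edges of the block that do not lie beyond `h` and `q` respectively, with `roots i` removed
from `D`. -/
theorem exists_localData (Y : Rooting G ρ) (ET : Finset (Sym2 V))
    (hE : ∀ e ∈ ET, e ∈ G.edgeSet) {r : ℕ} (roots : Fin r → Sym2 V) (i : Fin r)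
    (hi : roots i ∈ ET) (hcase : IsLeafy ET roots i ∨ IsBranch Y ET roots i) :
    ∃ (A D : Set (Sym2 V)) (bad : Prop) (h q : Sym2 V), LocalData Y ET roots i A D bad h q := by
  have hiG := hE _ hi
  rcases hcase with hL | hB
  · refine ⟨{roots i}, ∅, False, roots i, roots i, ⟨rfl, ?_, ?_, ?_, False.elim, False.elim,
      False.elim, False.elim, False.elim, False.elim, False.elim, False.elim, False.elim,
      False.elim, False.elim, False.elim⟩⟩
    · rintro f rfl; exact hi
    · rintro f rfl; exact Or.inl rfl
    · rintro f rfl g hg _ hinc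
      by_cases hgE : g ∈ ET
      · exact Or.inr (Or.inl ⟨rfl, hL g hgE hinc⟩)
      · exact Or.inl ⟨rfl, hgE⟩
  · by_cases hb : ∃ b ∈ intBd G ET, Y.Below (Y.ch (roots i)) (Y.ch b)
    · obtain ⟨b, hb, hbB⟩ := hb
      obtain ⟨hbinc, huniq⟩ := hB.bd b hb hbB
      have hbE : b ∈ ET := (Finset.mem_filter.mp hb).1
      have hbG := hE b hbE
      have hbne : Y.ch b ≠ Y.ch (roots i) := by
        intro h
        exact hB.not_bd (Rooting.ch_inj hbG hiG h ▸ hb)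
      obtain ⟨h', hh'ρ, hh'p, hh'b⟩ := hbB.exists_child hbne
      have hhG := Y.edge h' hh'ρ
      have hhch := Y.ch_edge h' hh'ρ
      have hhne : roots i ≠ s(h', Y.p h') := by
        intro h
        have h1 := congrArg Y.ch h
        rw [hhch] at h1
        have h2 := Y.dep_p h' hh'ρ
        rw [hh'p, h1] at h2
        omega
      have hhinc : EdgeInc (roots i) s(h', Y.p h') := by
        refine ⟨hhne, Y.ch (roots i), (Rooting.mem_edge hiG).mpr (Or.inl rfl), ?_⟩
        rw [hh'p]; exact Sym2.mem_mk_right _ _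
      have hhE : s(h', Y.p h') ∈ ET := by
        by_contra hno
        exact hB.not_bd (mem_intBd_of_inc hi hhG hno hhinc)
      have hbh : Y.ch b ≠ h' := by
        intro h
        apply hbinc
        rw [Y.eq_ch b hbG, h]
        exact hhinc
      obtain ⟨q', hq'ρ, hq'p, hq'b⟩ := hh'b.exists_child hbh
      have hqG := Y.edge q' hq'ρ
      have hqch := Y.ch_edge q' hq'ρ
      have hqdep : ¬ Y.Below q' h' := by
        intro h
        have h1 := h.dep_le
        have h2 := Y.dep_p q' hq'ρ
        rw [hq'p] at h2
        omega
      have hhbelow : Y.Below (Y.ch (roots i)) h' := by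
        apply Rooting.Below.of_parent hh'ρ
        rw [hh'p]; exact Rooting.Below.refl _
      have hdepi : ¬ Y.Below h' (Y.ch (roots i)) := by
        rw [← hh'p]; exact Rooting.not_below_parent hh'ρ
      refine ⟨{f | f ∈ ET ∧ Y.Below (Y.ch (roots i)) (Y.ch f) ∧ ¬ Y.Below h' (Y.ch f)},
        {f | f ∈ ET ∧ Y.Below (Y.ch (roots i)) (Y.ch f) ∧ f ≠ roots i ∧ ¬ Y.Below q' (Y.ch f)},
        True, s(h', Y.p h'), s(q', Y.p q'), ?_⟩
      constructor
      · exact ⟨hi, Rooting.Below.refl _, hdepi⟩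
      · exact fun f hf => hf.1
      · exact fun f hf => Or.inr ⟨hB, hf.2.1⟩
      · rintro f ⟨hfE, hfB, hfh⟩ g hgG hgA hinc
        by_cases hgE : g ∈ ET
        · by_cases hgB : Y.Below (Y.ch (roots i)) (Y.ch g)
          · have hgh : Y.Below h' (Y.ch g) := by
              by_contra hno; exact hgA ⟨hgE, hgB, hno⟩
            have := Rooting.ch_eq_of_leave hgG (hE f hfE) hinc.comm hgh hfh
            exact Or.inr (Or.inr ⟨trivial, by rw [← this]; exact Y.eq_ch g hgG⟩)
          · have hf := Rooting.ch_inj (hE f hfE) hiG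
              (Rooting.ch_eq_of_leave (hE f hfE) hgG hinc hfB hgB)
            subst hf
            exact Or.inr (Or.inl ⟨rfl, hB.nbr g hgE hinc hgB⟩)
        · have := huniq f (mem_intBd_of_inc hfE hgG hgE hinc) hfB
          subst this
          exact absurd hh'b hfh
      · exact fun _ => hB
      · exact fun _ => hhE
      · exact fun _ => hhinc
      · intro _; rw [hhch]; exact hhbelow
      · exact fun _ f hf => hf.1
      · exact fun _ f hf => hf.2.1
      · intro _
        refine ⟨hhE, ?_, hhne.symm, ?_⟩
        · rw [hhch]; exact hhbelow
        · rw [hhch]; exact hqdep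
      · exact fun _ hf => hf.2.2.1 rfl
      · exact fun _ => hqG
      · intro _
        refine ⟨?_, h', Sym2.mem_mk_left _ _, ?_⟩
        · intro h
          have h1 := congrArg Y.ch h
          rw [hhch, hqch] at h1
          exact hqdep (h1 ▸ Rooting.Below.refl _)
        · rw [hq'p]; exact Sym2.mem_mk_right _ _
      · rintro - f ⟨hfE, hfB, hfi, hfq⟩ g hgG hgD hinc
        by_cases hgi : g = roots i
        · exact Or.inl hgi
        right
        by_cases hgE : g ∈ ET
        · by_cases hgB : Y.Below (Y.ch (roots i)) (Y.ch g)
          · have hgq : Y.Below q' (Y.ch g) := by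
              by_contra hno; exact hgD ⟨hgE, hgB, hgi, hno⟩
            have := Rooting.ch_eq_of_leave hgG (hE f hfE) hinc.comm hgq hfq
            rw [← this]; exact Y.eq_ch g hgG
          · exact absurd (Rooting.ch_inj (hE f hfE) hiG
              (Rooting.ch_eq_of_leave (hE f hfE) hgG hinc hfB hgB)) hfi
        · have := huniq f (mem_intBd_of_inc hfE hgG hgE hinc) hfB
          subst this
          exact absurd hq'b hfq
      · exact fun _ => ⟨b, hb, hbB⟩
    · refine ⟨{f | f ∈ ET ∧ Y.Below (Y.ch (roots i)) (Y.ch f)}, ∅, False, roots i, roots i,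
        ⟨⟨hi, Rooting.Below.refl _⟩, fun f hf => hf.1, fun f hf => Or.inr ⟨hB, hf.2⟩, ?_,
        False.elim, False.elim,
        False.elim, False.elim, False.elim, False.elim, False.elim, False.elim, False.elim,
        False.elim, False.elim, False.elim⟩⟩
      rintro f ⟨hfE, hfB⟩ g hgG hgA hinc
      by_cases hgE : g ∈ ET
      · have hgB : ¬ Y.Below (Y.ch (roots i)) (Y.ch g) := fun h => hgA ⟨hgE, h⟩
        have hf := Rooting.ch_inj (hE f hfE) hiG
          (Rooting.ch_eq_of_leave (hE f hfE) hgG hinc hfB hgB)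
        subst hf
        exact Or.inr (Or.inl ⟨rfl, hB.nbr g hgE hinc hgB⟩)
      · exact absurd ⟨f, mem_intBd_of_inc hfE hgG hgE hinc, hfB⟩ hb

/-- The local data fit together because distinct branches are disjoint, and at most two indices
are exceptional because each of them uses up an edge of the interior boundary. -/
theorem exists_switchData (Y : Rooting G ρ) (ET : Finset (Sym2 V))
    (hE : ∀ e ∈ ET, e ∈ G.edgeSet) (hbd : (intBd G ET).card ≤ 2) {r : ℕ} (roots : Fin r → Sym2 V)
    (hinj : Function.Injective roots) (hr : ∀ i, roots i ∈ ET)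
    (hcase : ∀ i, IsLeafy ET roots i ∨ IsBranch Y ET roots i) :
    ∃ (A D : Fin r → Set (Sym2 V)) (S : Finset (Fin r)) (h q : Fin r → Sym2 V),
      SwitchData G ET roots A D S h q ∧ S.card ≤ 2 := by
  choose A D bad h q X using fun i => exists_localData Y ET hE roots i (hr i) (hcase i)
  have hBB : ∀ i j f, IsBranch Y ET roots i → IsBranch Y ET roots j →
      Y.Below (Y.ch (roots i)) (Y.ch f) → Y.Below (Y.ch (roots j)) (Y.ch f) → i = j := by
    intro i j f hi hj h1 h2
    by_contra hij
    rcases h1.total h2 with h | h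
    · exact hi.root_not_below j (Ne.symm hij) h
    · exact hj.root_not_below i hij h
  have hBA : ∀ i j f, IsBranch Y ET roots i → Y.Below (Y.ch (roots i)) (Y.ch f) → f ∈ A j →
      i = j := by
    intro i j f hi h1 hf
    rcases (X j).A_below f hf with rfl | ⟨hj, h2⟩
    · by_contra hij
      exact hi.root_not_below j (Ne.symm hij) h1
    · exact hBB i j f hi hj h1 h2
  have hAA : ∀ i j, ∀ f ∈ A i, f ∈ A j → i = j := by
    intro i j f hi hj
    rcases (X i).A_below f hi with rfl | ⟨hi', h1⟩
    · rcases (X j).A_below _ hj with h | ⟨hj', h2⟩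
      · exact hinj h
      · by_contra hij
        exact hj'.root_not_below i hij h2
    · exact hBA i j f hi' h1 hj
  refine ⟨A, D, Finset.univ.filter bad, h, q, ?_, ?_⟩
  · refine ⟨fun i => hE _ (hr i), fun i => (X i).root_mem, fun i => (X i).A_sub, hAA, ?_, ?_,
      ?_, ?_, ?_, ?_, ?_, ?_, ?_, ?_, ?_⟩ <;>
    try simp only [Finset.mem_filter, Finset.mem_univ, true_and]
    · intro i j hij f hf g hg hinc
      have hgi : g ∉ A i := fun h => hij (hAA i j g h hg)
      rcases (X i).A_out f hf g (hE g ((X j).A_sub g hg)) hgi hinc with h | h | h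
      · exact absurd ((X j).A_sub g hg) h.2
      · obtain ⟨h1, l, rfl⟩ := h
        rw [hAA l j _ (X l).root_mem hg]
        exact ⟨h1, rfl⟩
      · obtain ⟨h1, rfl⟩ := h
        exact absurd (hBA i j _ ((X i).branch h1) ((X i).h_below h1) hg) hij
    · intro i f hf g hgG hg hinc
      rcases (X i).A_out f hf g hgG (hg i) hinc with h | h | h
      · exact Or.inl h
      · obtain ⟨h1, l, rfl⟩ := h
        exact absurd (X l).root_mem (hg l)
      · exact Or.inr h
    · exact fun i hi => hE _ ((X i).h_edge hi)
    · exact fun i hi => (X i).h_inc hi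
    · exact fun i hi => (X i).D_sub hi
    · exact fun i hi => (X i).h_mem hi
    · exact fun i hi => (X i).q_edge hi
    · exact fun i hi => (X i).q_inc hi
    · exact fun i hi => (X i).D_out hi
    · intro i hi j hj
      by_cases hij : j = i
      · subst hij; exact (X j).root_notMem hi hj
      · exact ((X i).branch hi).root_not_below j hij ((X i).D_below hi _ hj)
    · intro i hi j hj hji hD
      exact hji (hBB j i _ ((X j).branch hj) ((X i).branch hi) ((X j).h_below hj)
        ((X i).D_below hi _ hD))
  · have hb : ∀ i, ∃ b, bad i → b ∈ intBd G ET ∧ Y.Below (Y.ch (roots i)) (Y.ch b) := by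
      intro i
      by_cases hi : bad i
      · obtain ⟨b, hb⟩ := (X i).bd hi
        exact ⟨b, fun _ => hb⟩
      · exact ⟨roots i, fun h => absurd h hi⟩
    choose b hb using hb
    refine le_trans (Finset.card_le_card_of_injOn b ?_ ?_) hbd
    · intro i hi
      exact (hb i (by simpa using hi)).1
    · intro i hi j hj hij
      have hi : bad i := by simpa using hi
      have hj : bad j := by simpa using hj
      exact hBB i j (b i) ((X i).branch hi) ((X j).branch hj) (hb i hi).2 (hij ▸ (hb j hj).2)

end Blocks

/-! ### The blocks of a rooted splitting tree -/

section HangingBlocks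

variable {V : Type} [Fintype V] [DecidableEq V] {G : SimpleGraph V} [DecidableRel G.Adj] {ρ : V}

theorem below_of_mem_hangBlock {V : Type} {G : SimpleGraph V} {ρ : V} (Y : Rooting G ρ)
    {ET : Finset (Sym2 V)} {R : Finset V}
    {e0 : Sym2 V} (hE : ∀ e ∈ ET, e ∈ G.edgeSet) (he0 : e0 ∈ G.edgeSet)
    (hR : Y.p (Y.ch e0) ∈ R) {f : Sym2 V} (hf : f ∈ hangBlock ET R e0) :
    Y.Below (Y.ch e0) (Y.ch f) := by
  have hf' := (Finset.mem_filter.mp hf).2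
  clear hf
  induction hf' with
  | refl => exact Rooting.Below.refl _
  | @tail a b _ hab ih =>
    obtain ⟨ha, hb, hinc, v, hva, hvb, hvR⟩ := hab
    by_contra hno
    have h1 := Rooting.ch_inj (hE a ha) he0
      (Rooting.ch_eq_of_leave (hE a ha) (hE b hb) hinc ih hno)
    subst h1
    rcases (Rooting.mem_edge (Y := Y) he0).mp hva with rfl | rfl
    · exact hno (Rooting.below_of_mem (hE b hb) hvb)
    · exact hvR hR

/-- `ET'` stands for the tree with or without the central edge of an edge-rooted partition. -/
theorem mem_hangBlock_of_below {V : Type} [DecidableEq V] {G : SimpleGraph V} {ρ : V}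
    (Y : Rooting G ρ) {ET ET' : Finset (Sym2 V)} {R : Finset V}
    {e0 : Sym2 V} (hE : ∀ e ∈ ET, e ∈ G.edgeSet) (hconn : EdgeConnectedSet ET) (he0 : e0 ∈ ET)
    (hET' : ∀ f ∈ ET, Y.Below (Y.ch e0) (Y.ch f) → f ∈ ET')
    (hR : ∀ x, Y.Below (Y.ch e0) x → x ∉ R) :
    ∀ (n : ℕ) (f : Sym2 V), Y.dep (Y.ch f) = n → f ∈ ET → Y.Below (Y.ch e0) (Y.ch f) →
      f ∈ hangBlock ET' R e0 := by
  intro n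
  induction n with
  | zero =>
    intro f hn hf _
    have := Y.dep_p _ (Y.ch_ne f (hE f hf))
    omega
  | succ n ih =>
    intro f hn hf hB
    have hfG := hE f hf
    rw [hangBlock, Finset.mem_filter]
    refine ⟨hET' f hf hB, ?_⟩
    rcases hB.cases with h | ⟨_, h⟩
    · rw [Rooting.ch_inj hfG (hE _ he0) h]
    · have hu : Y.p (Y.ch f) ≠ ρ := h.ne_root (Y.ch_ne _ (hE _ he0))
      have hpar := Rooting.parent_mem hE hconn hf he0 (fun hh =>
        Rooting.not_below_parent (Y.ch_ne _ (hE _ he0)) (h.trans hh)) hu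
      have hch := Y.ch_edge _ hu
      have hdep := Y.dep_p _ (Y.ch_ne f hfG)
      have hparB : Y.Below (Y.ch e0) (Y.ch s(Y.p (Y.ch f), Y.p (Y.p (Y.ch f)))) := by
        rw [hch]; exact h
      have hih := ih s(Y.p (Y.ch f), Y.p (Y.p (Y.ch f))) (by rw [hch]; omega) hpar hparB
      refine Relation.ReflTransGen.tail (Finset.mem_filter.mp hih).2 ⟨hET' _ hpar hparB,
        hET' f hf hB, ⟨?_, ?_⟩, ?_⟩
      · intro hh
        have := congrArg Y.ch hh
        rw [hch] at this
        rw [this] at hdep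
        omega
      · exact ⟨Y.p (Y.ch f), Sym2.mem_mk_left _ _, (Rooting.mem_edge hfG).mpr (Or.inr rfl)⟩
      · exact ⟨Y.p (Y.ch f), Sym2.mem_mk_left _ _, (Rooting.mem_edge hfG).mpr (Or.inr rfl),
          hR _ h⟩

/-- The common part of the vertex-rooted and the edge-rooted cases: `R` is the set of root
vertices, and the block hanging from `roots i` is a splitting subtree. -/
theorem leafy_or_branch (Y : Rooting G ρ) {ET ET' : Finset (Sym2 V)} {R : Finset V} {r : ℕ}
    {roots : Fin r → Sym2 V} {i : Fin r} (hE : ∀ e ∈ ET, e ∈ G.edgeSet)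
    (hconn : EdgeConnectedSet ET)
    (hfringe : ∀ e ∈ intBd G ET, ∃ v : V, v ∈ e ∧ degT ET v = 1)
    (hinj : Function.Injective roots) (hr : ∀ i, roots i ∈ ET)
    (hsub : ET' ⊆ ET)
    (hET' : ∀ f ∈ ET, Y.Below (Y.ch (roots i)) (Y.ch f) → f ∈ ET')
    (hR : ∀ x, Y.Below (Y.ch (roots i)) x → x ∉ R)
    (hpR : ∀ j, Y.p (Y.ch (roots j)) ∈ R)
    (hRroot : ∀ g ∈ ET, ∀ v ∈ R, v ∈ g → ∃ j, g = roots j)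
    (hdeg : 2 ≤ degT ET (Y.p (Y.ch (roots i))))
    (hother : ∃ j, j ≠ i ∧ EdgeInc (roots i) (roots j))
    (hsplit : IsSplitting G (hangBlock ET' R (roots i))) :
    IsLeafy ET roots i ∨ IsBranch Y ET roots i := by
  have hiG := hE _ (hr i)
  have hF2 : ∀ j, j ≠ i → ¬ Y.Below (Y.ch (roots i)) (Y.ch (roots j)) := by
    intro j hj h
    rcases h.cases with h | ⟨_, h⟩
    · exact hj (hinj (Rooting.ch_inj (hE _ (hr j)) hiG h))
    · exact hR _ h (hpR j)
  have hF3 : ∀ g ∈ ET, EdgeInc (roots i) g → ¬ Y.Below (Y.ch (roots i)) (Y.ch g) →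
      ∃ j, g = roots j := by
    intro g hg ⟨_, v, hvi, hvg⟩ hno
    rcases (Rooting.mem_edge (Y := Y) hiG).mp hvi with rfl | rfl
    · exact absurd (Rooting.below_of_mem (hE g hg) hvg) hno
    · exact hRroot g hg _ (hpR i) hvg
  by_cases hbd : roots i ∈ intBd G ET
  · left
    obtain ⟨v, hv, hdv⟩ := hfringe _ hbd
    have hv : v = Y.ch (roots i) := by
      rcases (Rooting.mem_edge (Y := Y) hiG).mp hv with h | h
      · exact h
      · rw [h] at hdv; omega
    subst hv
    obtain ⟨e1, he1⟩ := Finset.card_eq_one.mp hdv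
    have huniq : ∀ g ∈ ET, Y.ch (roots i) ∈ g → g = e1 := by
      intro g hg hgv
      have : g ∈ ET.filter fun e => Y.ch (roots i) ∈ e := Finset.mem_filter.mpr ⟨hg, hgv⟩
      rw [he1] at this
      exact Finset.mem_singleton.mp this
    have hi1 := huniq _ (hr i) ((Rooting.mem_edge hiG).mpr (Or.inl rfl))
    intro g hg hinc
    obtain ⟨hne, v, hvi, hvg⟩ := hinc
    rcases (Rooting.mem_edge (Y := Y) hiG).mp hvi with rfl | rfl
    · exact absurd (hi1.trans (huniq g hg hvg).symm) hne
    · exact hRroot g hg _ (hpR i) hvg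
  · right
    refine ⟨hbd, hF2, hF3, ?_⟩
    set B := hangBlock ET' R (roots i) with hB
    have hmem : ∀ f ∈ ET, Y.Below (Y.ch (roots i)) (Y.ch f) → f ∈ B := fun f hf hfB =>
      mem_hangBlock_of_below Y hE hconn (hr i) hET' hR _ f rfl hf hfB
    have hBE : ∀ f ∈ B, f ∈ ET := fun f hf => hsub (Finset.mem_filter.mp hf).1
    have hiB : roots i ∈ B := hmem _ (hr i) (Rooting.Below.refl _)
    -- the root of the block lies on the interior boundary of the block
    have hiBd : roots i ∈ intBd G B := by
      obtain ⟨j, hj, hinc⟩ := hother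
      refine mem_intBd_of_inc hiB (hE _ (hr j)) ?_ hinc
      intro h
      exact hF2 j hj (below_of_mem_hangBlock Y (fun e he => hE e (hsub he)) hiG (hpR i) h)
    have hbBd : ∀ b ∈ intBd G ET, Y.Below (Y.ch (roots i)) (Y.ch b) →
        b ∈ intBd G B ∧ b ≠ roots i := by
      intro b hb hbB
      obtain ⟨hbE, g, hg, hinc⟩ := Finset.mem_filter.mp hb
      have hg := (Finset.mem_filter.mp hg).1
      rw [Finset.mem_sdiff, SimpleGraph.mem_edgeFinset] at hg
      refine ⟨mem_intBd_of_inc (hmem b hbE hbB) hg.1 (fun h => hg.2 (hBE g h)) hinc, ?_⟩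
      rintro rfl
      exact hbd hb
    obtain ⟨_, _, _, hone | ⟨_, hcard, hnon⟩⟩ := hsplit
    · intro b hb hbB
      obtain ⟨h1, h2⟩ := hbBd b hb hbB
      exact absurd (Finset.card_le_one.mp hone.le b (Finset.mem_filter.mp h1).1 _ hiB) h2
    · intro b hb hbB
      obtain ⟨h1, h2⟩ := hbBd b hb hbB
      refine ⟨hnon _ hiBd _ h1 h2.symm, ?_⟩
      intro b' hb' hbB'
      obtain ⟨h1', h2'⟩ := hbBd b' hb' hbB'
      by_contra hne
      have : ({b', b, roots i} : Finset (Sym2 V)).card ≤ (intBd G B).card := by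
        apply Finset.card_le_card
        intro x hx
        simp only [Finset.mem_insert, Finset.mem_singleton] at hx
        rcases hx with rfl | rfl | rfl <;> assumption
      rw [Finset.card_eq_three.mpr ⟨b', b, roots i, hne, h2', h2, rfl⟩] at this
      omega

theorem exists_switchData_of_setting (hG : G.IsTree) {ET : Finset (Sym2 V)}
    (hET : IsSplitting G ET) (hcard : 2 ≤ ET.card) {r : ℕ} {blocks : Fin r → Finset (Sym2 V)}
    {roots : Fin r → Sym2 V} (hset : TreeBlockSetting G ET blocks roots)
    (hA1 : ∀ i, IsSplitting G (blocks i)) :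
    ∃ (A D : Fin r → Set (Sym2 V)) (S : Finset (Fin r)) (h q : Fin r → Sym2 V),
      SwitchData G ET roots A D S h q ∧ S.card ≤ 2 := by
  obtain ⟨hsubG, _, hconn, hone | ⟨hfringe, hbd2, _⟩⟩ := hET
  · omega
  have hE : ∀ e ∈ ET, e ∈ G.edgeSet := fun e he => SimpleGraph.mem_edgeFinset.mp (hsubG he)
  rcases hset with ⟨ρ, hdeg, hinj, hr, hroot, hblocks⟩ | ⟨e, heE, hebd, hdeg, hinj, ⟨i0, hi0, _⟩,
    hr, hroot⟩
  · obtain ⟨Y⟩ := exists_rooting G hG ρ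
    have hp : ∀ i, Y.p (Y.ch (roots i)) = ρ := by
      intro i
      have hiG := hE _ (hr i).1
      rcases (Rooting.mem_edge (Y := Y) hiG).mp (hr i).2 with h | h
      · exact absurd h.symm (Y.ch_ne _ hiG)
      · exact h.symm
    refine exists_switchData Y ET hE hbd2 roots hinj (fun i => (hr i).1) fun i => ?_
    refine leafy_or_branch Y (ET' := ET) (R := {ρ}) hE hconn hfringe hinj (fun i => (hr i).1)
      (Finset.Subset.refl _) (fun f hf _ => hf) ?_ ?_ ?_ ?_ ?_ ?_
    · intro x hx
      rw [Finset.mem_singleton]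
      exact hx.ne_root (Y.ch_ne _ (hE _ (hr i).1))
    · intro j; rw [hp j]; exact Finset.mem_singleton_self _
    · intro g hg v hv hvg
      rw [Finset.mem_singleton] at hv
      subst hv
      obtain ⟨j, hj⟩ := hroot g hg hvg
      exact ⟨j, hj.symm⟩
    · rw [hp i]; exact hdeg
    · obtain ⟨f, hf, hne⟩ := Finset.exists_mem_ne (s := ET.filter fun e => ρ ∈ e)
        (by have := hdeg; rw [degT] at this; omega) (roots i)
      rw [Finset.mem_filter] at hf
      obtain ⟨j, rfl⟩ := hroot f hf.1 hf.2
      exact ⟨j, fun h => hne (by rw [h]), hne.symm, ρ, (hr i).2, hf.2⟩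
    · rw [← hblocks i]; exact hA1 i
  · have heG := hE e heE
    obtain ⟨x, hx⟩ : ∃ x, x ∈ e := ⟨_, Sym2.out_fst_mem e⟩
    obtain ⟨Y⟩ := exists_rooting G hG x
    have hpe : Y.p (Y.ch e) = x := by
      rcases (Rooting.mem_edge (Y := Y) heG).mp hx with h | h
      · exact absurd h.symm (Y.ch_ne _ heG)
      · exact h.symm
    have hrE : ∀ i, roots i ∈ ET := by
      intro i
      rcases hr i with h | h
      · rw [h]; exact heE
      · exact h.1
    have hp : ∀ i, Y.p (Y.ch (roots i)) ∈ e := by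
      intro i
      rcases hr i with h | ⟨_, hne, ⟨_, v, hve, hvi⟩, _⟩
      · rw [h, hpe]; exact hx
      · rcases (Rooting.mem_edge (Y := Y) (hE _ (hrE i))).mp hvi with rfl | rfl
        · rcases (Rooting.mem_edge (Y := Y) heG).mp hve with h | h
          · exact absurd (Rooting.ch_inj (hE _ (hrE i)) heG h) hne
          · rw [hpe] at h
            exact absurd h (Y.ch_ne _ (hE _ (hrE i)))
        · exact hve
    refine exists_switchData Y ET hE hbd2 roots hinj hrE fun i => ?_
    rcases hr i with hie | ⟨_, hne, hinc, hblock⟩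
    · left
      intro g hg hinc
      rw [hie] at hinc
      obtain ⟨j, hj⟩ := hroot g hg hinc.1.symm hinc
      exact ⟨j, hj.symm⟩
    have hnotR : ∀ w, Y.Below (Y.ch (roots i)) w → w ∉ e := by
      intro w hw hwe
      have hroot0 : ¬ Y.Below (Y.ch (roots i)) x := fun h =>
        h.ne_root (Y.ch_ne _ (hE _ (hrE i))) rfl
      rcases (Rooting.mem_edge (Y := Y) heG).mp hwe with rfl | rfl
      · rcases hw.cases with h | h
        · exact hne (Rooting.ch_inj (hE _ (hrE i)) heG h.symm)
        · rw [hpe] at h; exact hroot0 h.2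
      · rw [hpe] at hw; exact hroot0 hw
    refine leafy_or_branch Y (ET' := ET.erase e) (R := Finset.univ.filter fun v => v ∈ e) hE
      hconn hfringe hinj hrE (Finset.erase_subset _ _) ?_ ?_ ?_ ?_ ?_ ?_ ?_
    · intro f hf hfB
      refine Finset.mem_erase.mpr ⟨?_, hf⟩
      rintro rfl
      exact hnotR _ hfB ((Rooting.mem_edge heG).mpr (Or.inl rfl))
    · intro w hw
      simpa using hnotR w hw
    · intro j
      simpa using hp j
    · intro g hg v hv hvg
      have hve : v ∈ e := by simpa using hv
      by_cases hge : g = e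
      · exact ⟨i0, by rw [hge, hi0]⟩
      · obtain ⟨j, hj⟩ := hroot g hg hge ⟨Ne.symm hge, v, hve, hvg⟩
        exact ⟨j, hj.symm⟩
    · exact hdeg _ (hp i)
    · refine ⟨i0, ?_, ?_⟩
      · rintro rfl; exact hne hi0
      · rw [hi0]; exact hinc.comm
    · have := hA1 i
      rw [hblock] at this
      exact this

end HangingBlocks

/-! ### From comparable fibres to the multiplicative error -/

/-- If the fibres of a map of finite sets have sizes within a factor `((d - 1) / (d - 2)) ^ 2` of
each other, the pushforward of the uniform distribution is uniform on the range up to `9 / d`. -/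
theorem abs_pushforward_sub_one_le {Ω β : Type*} [Fintype Ω] [DecidableEq β] (φ : Ω → β) (d : ℕ)
    (hd : 3 ≤ d)
    (hφ : ∀ σ η : Ω, (Finset.univ.filter fun x => φ x = φ σ).card * (d - 2) ^ 2 ≤
      (Finset.univ.filter fun x => φ x = φ η).card * (d - 1) ^ 2) (σ : Ω) :
    |((Finset.univ.filter fun x => φ x = φ σ).card : ℝ) / (Fintype.card Ω : ℝ) *
      ((Finset.univ.image φ).card : ℝ) - 1| ≤ 9 / d := by
  have hsum : Fintype.card Ω = ∑ b ∈ Finset.univ.image φ,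
      (Finset.univ.filter fun x => φ x = b).card := by
    rw [← Finset.card_univ]
    exact Finset.card_eq_sum_card_image φ _
  set M := (Finset.univ.image φ).card with hM
  set N := (Finset.univ.filter fun x => φ x = φ σ).card with hN
  set W := Fintype.card Ω with hW
  have h1 : M * (N * (d - 2) ^ 2) ≤ W * (d - 1) ^ 2 := by
    rw [hsum, Finset.sum_mul, ← smul_eq_mul]
    refine Finset.card_nsmul_le_sum _ _ _ fun b hb => ?_
    obtain ⟨η, _, rfl⟩ := Finset.mem_image.mp hb
    exact hφ σ η
  have h2 : W * (d - 2) ^ 2 ≤ M * (N * (d - 1) ^ 2) := by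
    rw [hsum, Finset.sum_mul, ← smul_eq_mul]
    refine Finset.sum_le_card_nsmul _ _ _ fun b hb => ?_
    obtain ⟨η, _, rfl⟩ := Finset.mem_image.mp hb
    exact hφ η σ
  have hWpos : 0 < W := Fintype.card_pos_iff.mpr ⟨σ⟩
  clear_value M N W
  clear hsum hφ
  obtain ⟨t, rfl⟩ := Nat.exists_eq_add_of_le hd
  have e1 : 3 + t - 2 = t + 1 := by omega
  have e2 : 3 + t - 1 = t + 2 := by omega
  rw [e1, e2] at h1 h2
  have h1' : (M : ℝ) * (N * (t + 1) ^ 2) ≤ W * (t + 2) ^ 2 := by exact_mod_cast h1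
  have h2' : (W : ℝ) * (t + 1) ^ 2 ≤ M * (N * (t + 2) ^ 2) := by exact_mod_cast h2
  have hW' : (0 : ℝ) < W := by exact_mod_cast hWpos
  have ht : (0 : ℝ) ≤ t := Nat.cast_nonneg t
  set x : ℝ := (N : ℝ) / W * M with hx
  have hxW : (M : ℝ) * N = x * W := by rw [hx]; field_simp
  have h3 : x * (t + 1) ^ 2 ≤ (t + 2) ^ 2 := by
    refine le_of_mul_le_mul_left ?_ hW'
    nlinarith
  have h4 : ((t : ℝ) + 1) ^ 2 ≤ x * (t + 2) ^ 2 := by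
    refine le_of_mul_le_mul_left ?_ hW'
    nlinarith
  have hx3 : x - 1 ≤ (2 * t + 3) / (t + 1) ^ 2 := by
    rw [le_div_iff₀ (by positivity)]; nlinarith
  have hx4 : 1 - x ≤ (2 * t + 3) / (t + 2) ^ 2 := by
    rw [le_div_iff₀ (by positivity)]; nlinarith
  have h5 : (2 * (t : ℝ) + 3) / (t + 1) ^ 2 ≤ 9 / ((3 + t : ℕ) : ℝ) := by
    push_cast
    rw [div_le_div_iff₀ (by positivity) (by positivity)]; nlinarith
  have h6 : (2 * (t : ℝ) + 3) / (t + 2) ^ 2 ≤ 9 / ((3 + t : ℕ) : ℝ) := by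
    push_cast
    rw [div_le_div_iff₀ (by positivity) (by positivity)]; nlinarith
  rw [abs_le]
  constructor <;> linarith

/-- in the tree block setting, assuming (A1) and (A2), there is a universal
constant `C₀ > 0` such that the projection `π_𝓡` of the uniform distribution on `Ω^μ_E`
onto `F` is uniform up to a multiplicative error `C₀/d`:
`|π_𝓡(σ̂)·|Ω_𝓡| − 1| ≤ C₀/d` for every `σ̂ ∈ Ω_𝓡`. -/
theorem tree_projected_distribution_near_uniform :
    ∃ C0 : ℝ, 0 < C0 ∧
      ∀ (V : Type) [Fintype V] [DecidableEq V] (G : SimpleGraph V) [DecidableRel G.Adj]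
        (d : ℕ), 3 ≤ d → G.IsTree → (∀ v : V, 2 ≤ G.degree v → G.degree v = d) →
      ∀ ET : Finset (Sym2 V), IsSplitting G ET → 2 ≤ ET.card →
      ∀ μ : Sym2 V → Fin (d + 1), ProperECol G μ →
      ∀ (r : ℕ) (blocks : Fin r → Finset (Sym2 V)) (roots : Fin r → Sym2 V),
        TreeBlockSetting G ET blocks roots →
        (∀ i, IsSplitting G (blocks i)) →
        (∀ (i : Fin r) (σ : OmegaE G (d + 1) ET μ),
          IsErgodicGen (treeGen G (d + 1) (blocks i) σ.1)) →
      ∀ σh : ↥(Set.range (resE G d ET μ roots)),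
        |piRE G d ET μ roots σh * (Fintype.card ↥(Set.range (resE G d ET μ roots)) : ℝ) - 1|
          ≤ C0 / d := by
  refine ⟨9, by norm_num, ?_⟩
  intro V _ _ G _ d hd hG _ ET hET hcard μ _ r blocks roots hset hA1 _ σh
  obtain ⟨A, D, S, h, q, X, hS⟩ := exists_switchData_of_setting hG hET hcard hset hA1
  obtain ⟨_, σ, rfl⟩ := σh
  have key := abs_pushforward_sub_one_le (resE G d ET μ roots) d hd
    (fun σ η => card_fibre_le X hd hS (resE G d ET μ roots σ) η) σ
  have h1 : Fintype.card ↥(Set.range (resE G d ET μ roots)) =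
      (Finset.univ.image (resE G d ET μ roots)).card := by
    rw [← Set.toFinset_card, Set.toFinset_range]
  have h2 : Fintype.card {τ : OmegaE G (d + 1) ET μ //
      resE G d ET μ roots τ = resE G d ET μ roots σ} = (Finset.univ.filter
        fun τ => resE G d ET μ roots τ = resE G d ET μ roots σ).card :=
    Fintype.card_subtype _
  unfold piRE
  rw [h1, h2]
  exact key
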